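/- Let η ≥ 1 and k ≥ 1 be integers, let G be a finite simple graph, and let X ⊆ V(G) be an η-treedepth deletion set of G. Then there exists a set Z ⊆ V(G) ∖ X with |Z| ≤ η·(k+η)·|X|² such that, writing R = V(G) ∖ (X ∪ Z), the following two properties hold: (1) for every connected component C of the induced subgraph G[R], |N_G(C) ∩ Z| ≤ η; and (2) for every η-treedepth deletion set S of G with |S| ≤ k and every connected component C of G[R], |(N_G(C) ∩ X) ∖ S| ≤ η. -/

import Mathlib

open SimpleGraph Set

variable {V : Type*}

/-- The connected component of `x` inside the induced subgraph `G[S]`, as a subset of `V`. -/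
def compIn (G : SimpleGraph V) (S : Set V) (x : V) : Set V :=
  {y | ∃ (hx : x ∈ S) (hy : y ∈ S), (G.induce S).Reachable ⟨x, hx⟩ ⟨y, hy⟩}

/-- `tdLE G n S` means that the treedepth of the induced subgraph `G[S]` is at most `n`,
following the recursive definition of treedepth: a graph has treedepth at most `n+1`
iff from every connected component one can delete a vertex leaving a graph of
treedepth at most `n`; only the empty graph has treedepth at most `0`. -/
def tdLE (G : SimpleGraph V) : ℕ → Set V → Prop
  | 0, S => S = ∅
  | n+1, S => ∀ x ∈ S, ∃ v ∈ compIn G S x, tdLE G n (compIn G S x \ {v})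

/-- The treedepth of the induced subgraph `G[S]`. -/
noncomputable def td (G : SimpleGraph V) (S : Set V) : ℕ :=
  sInf {n | tdLE G n S}

/-- `N_G(C)`: the set of vertices outside `C` having a neighbor in `C`. -/
def nbhd (G : SimpleGraph V) (C : Set V) : Set V :=
  {v | v ∉ C ∧ ∃ u ∈ C, G.Adj u v}

/-- `C` is a connected component of the induced subgraph `G[R]`. -/
def IsCompOf (G : SimpleGraph V) (R C : Set V) : Prop :=
  ∃ x ∈ R, C = compIn G R x

/-- `S` is an `η`-treedepth deletion set of `G`: `td(G − S) ≤ η`. -/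
def IsTDS (G : SimpleGraph V) (η : ℕ) (S : Set V) : Prop :=
  td G Sᶜ ≤ η

/-- `S` is a connected `η`-treedepth deletion set of `G`. -/
def IsCTDS (G : SimpleGraph V) (η : ℕ) (S : Set V) : Prop :=
  IsTDS G η S ∧ S.Nonempty ∧ (G.induce S).Connected

/-- A rooted forest with vertex set `A ⊆ V`, given by its (reflexive) ancestor relation:
`anc u v` means `u` is an ancestor of `v` (every vertex being an ancestor of itself). -/
structure RootedForest (V : Type*) (A : Set V) where
  anc : V → V → Prop
  mem_left : ∀ {u v}, anc u v → u ∈ A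
  mem_right : ∀ {u v}, anc u v → v ∈ A
  refl : ∀ v ∈ A, anc v v
  trans : ∀ {u v w}, anc u v → anc v w → anc u w
  antisymm : ∀ {u v}, anc u v → anc v u → u = v
  chain : ∀ {u w v}, anc u v → anc w v → anc u w ∨ anc w u

/-- Depth of a rooted forest: the maximum number of vertices on a root-to-leaf path,
i.e. the maximum number of ancestors of a vertex. -/
noncomputable def RootedForest.depth [Fintype V] {A : Set V} (F : RootedForest V A) : ℕ :=
  Finset.univ.sup fun v : V => {u | F.anc u v}.ncard

/-- `F` is a treedepth decomposition of `G[A]`: the endpoints of every edge of `G[A]`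
are in ancestor-descendant relation in `F`. -/
def IsTDDecompOn (G : SimpleGraph V) (A : Set V) (F : RootedForest V A) : Prop :=
  ∀ u v, u ∈ A → v ∈ A → G.Adj u v → F.anc u v ∨ F.anc v u

/-- `A` is an `(x,y)`-vertex cut in `G`: `A` avoids `x` and `y` and there is
no path from `x` to `y` in `G − A`. -/
def IsVertexCut (G : SimpleGraph V) (x y : V) (A : Set V) : Prop :=
  ∃ (hx : x ∈ Aᶜ) (hy : y ∈ Aᶜ), ¬ (G.induce Aᶜ).Reachable ⟨x, hx⟩ ⟨y, hy⟩

/-- The weight of a subgraph: the sum of the weights of its edges. -/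
noncomputable def subWeight (w : Sym2 V → ℕ) {G : SimpleGraph V} (T : G.Subgraph) : ℕ :=
  ∑ᶠ e ∈ T.edgeSet, w e

/-- The leaves (vertices with exactly one neighbor) of a subgraph. -/
def subLeaves {G : SimpleGraph V} (T : G.Subgraph) : Set V :=
  {v | (T.neighborSet v).ncard = 1}

/-- `T` is a Steiner tree for the terminal set `R` in `G`. -/
def IsSteinerTree (G : SimpleGraph V) (R : Set V) (T : G.Subgraph) : Prop :=
  T.coe.IsTree ∧ R ⊆ T.verts

/-- `T` is a `t`-component for `R`: a tree with at most `t` leaves, all of which lie in `R`. -/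
def IsTComponent (G : SimpleGraph V) (R : Set V) (t : ℕ) (T : G.Subgraph) : Prop :=
  T.coe.IsTree ∧ (subLeaves T).ncard ≤ t ∧ subLeaves T ⊆ R

/-!
Fix a treedepth decomposition `F` of `G - X` of depth at most `η`. In a treedepth decomposition
every connected vertex set has a member that is an ancestor of all the others. Two consequences
carry the proof.

* If `Z` is closed under taking ancestors, then a component `C` avoiding `Z` sees in `Z` only
  ancestors of its topmost vertex, hence at most `η` vertices.
* Two incomparable vertices are separated by their common ancestors. Since a chain has at most
  `η` vertices, any `η + 1` vertices of a graph of treedepth at most `η` contain two that are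
  separated by at most `η` other vertices.

Take for `W` the union, over the pairs `x, y ∈ X`, of a set of at most `k + η` vertices separating
`x` from `y` in `G - (X \ {x, y})` (where there is one), and for `Z` the set of all ancestors of
`W`. If `N(C) ∩ X \ S` had more than `η` elements, two of them, `x` and `y`, would be separated in
`G` by `S` and `η` further vertices, hence also by `(X \ {x, y}) ∪ W`; but `C` connects `x` to `y`
and avoids `X ∪ Z`.
-/

theorem encard_biUnion_le_mul {α β : Type*} {s : Set α} {f : α → Set β} {n : ℕ∞}
    (h : ∀ a ∈ s, (f a).encard ≤ n) : (⋃ a ∈ s, f a).encard ≤ s.encard * n := by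
  rcases s.finite_or_infinite with hs | hs
  · calc (⋃ a ∈ s, f a).encard
        ≤ ∑ a ∈ hs.toFinset, (f a).encard := by
          simpa only [Finite.mem_toFinset] using hs.toFinset.set_encard_biUnion_le f
      _ ≤ hs.toFinset.card • n :=
          Finset.sum_le_card_nsmul _ _ _ fun a ha => h a (hs.mem_toFinset.1 ha)
      _ = s.encard * n := by rw [hs.encard_eq_coe_toFinset_card, nsmul_eq_mul]
  · rcases eq_or_ne n 0 with rfl | hn
    · have hempty (a : α) (ha : a ∈ s) : f a = ∅ :=
        encard_eq_zero.1 (nonpos_iff_eq_zero.1 (h a ha))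
      simp [iUnion₂_congr hempty]
    · simp [hs.encard_eq, ENat.top_mul hn]

section Components

variable {G : SimpleGraph V} {R S T C : Set V} {u v x y z : V}

theorem compIn_subset : compIn G S x ⊆ S :=
  fun _ h => h.2.1

theorem self_mem_compIn (hx : x ∈ S) : x ∈ compIn G S x :=
  ⟨hx, hx, .refl _⟩

theorem mem_compIn_symm (h : y ∈ compIn G S x) : x ∈ compIn G S y :=
  ⟨h.2.1, h.1, h.2.2.symm⟩

theorem mem_compIn_trans (hxy : y ∈ compIn G S x) (hyz : z ∈ compIn G S y) : z ∈ compIn G S x :=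
  ⟨hxy.1, hyz.2.1, hxy.2.2.trans hyz.2.2⟩

theorem mem_compIn_of_adj (hx : x ∈ S) (hy : y ∈ S) (h : G.Adj x y) : y ∈ compIn G S x :=
  ⟨hx, hy, Adj.reachable (G := G.induce S) h⟩

theorem compIn_induction {p : V → Prop} (self : p x)
    (adj : ∀ u ∈ compIn G S x, ∀ v ∈ S, G.Adj u v → p u → p v) (hy : y ∈ compIn G S x) : p y := by
  obtain ⟨hx, hyS, hxy⟩ := hy
  have of_reflTransGen (z : S) (h : Relation.ReflTransGen (G.induce S).Adj ⟨x, hx⟩ z) : p z := by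
    induction h with
    | refl => exact self
    | @tail u v hxu huv ih =>
      exact adj u ⟨hx, u.2, (reachable_iff_reflTransGen _ _).2 hxu⟩ v v.2 huv ih
  exact of_reflTransGen ⟨y, hyS⟩ ((reachable_iff_reflTransGen _ _).1 hxy)

theorem compIn_mono (hST : S ⊆ T) : compIn G S x ⊆ compIn G T x := fun _ hy =>
  compIn_induction (self_mem_compIn (hST hy.1))
    (fun _ hu _ hv huv hxu =>
      mem_compIn_trans hxu (mem_compIn_of_adj (hST (compIn_subset hu)) (hST hv) huv)) hy

theorem isCompOf_compIn (hx : x ∈ R) : IsCompOf G R (compIn G R x) :=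
  ⟨x, hx, rfl⟩

theorem IsCompOf.subset (hC : IsCompOf G R C) : C ⊆ R := by
  obtain ⟨x, -, rfl⟩ := hC
  exact compIn_subset

theorem IsCompOf.eq_compIn (hC : IsCompOf G R C) (hx : x ∈ C) : C = compIn G R x := by
  obtain ⟨w, -, rfl⟩ := hC
  ext y
  exact ⟨mem_compIn_trans (mem_compIn_symm hx), mem_compIn_trans hx⟩

theorem pairwise_disjoint_isCompOf :
    Pairwise (Function.onFun Disjoint fun C : {C // IsCompOf G R C} => C.1) := by
  refine fun C D hCD => Set.disjoint_left.2 fun _ hxC hxD => hCD (Subtype.ext ?_)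
  rw [C.2.eq_compIn hxC, D.2.eq_compIn hxD]

theorem iUnion_isCompOf (G : SimpleGraph V) (R : Set V) : ⋃ C : {C // IsCompOf G R C}, C.1 = R :=
  Subset.antisymm (iUnion_subset fun C => C.2.subset) fun _ hx =>
    mem_iUnion.2 ⟨⟨_, isCompOf_compIn hx⟩, self_mem_compIn hx⟩

theorem IsCompOf.mem_of_adj (hC : IsCompOf G R C) (hu : u ∈ C) (hv : v ∈ R) (h : G.Adj u v) :
    v ∈ C := by
  rw [hC.eq_compIn hu]
  exact mem_compIn_of_adj (hC.subset hu) hv h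

end Components

section VertexCuts

variable {G : SimpleGraph V} {A B C R X : Set V} {x y : V}

theorem isVertexCut_iff :
    IsVertexCut G x y A ↔ x ∉ A ∧ y ∉ A ∧ y ∉ compIn G Aᶜ x :=
  ⟨fun ⟨hx, hy, h⟩ => ⟨hx, hy, fun ⟨_, _, h'⟩ => h h'⟩,
    fun ⟨hx, hy, h⟩ => ⟨hx, hy, fun h' => h ⟨hx, hy, h'⟩⟩⟩

theorem IsVertexCut.mono (h : IsVertexCut G x y A) (hAB : A ⊆ B) (hx : x ∉ B) (hy : y ∉ B) :
    IsVertexCut G x y B :=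
  isVertexCut_iff.2 ⟨hx, hy, fun hxy =>
    (isVertexCut_iff.1 h).2.2 (compIn_mono (compl_subset_compl.2 hAB) hxy)⟩

theorem IsCompOf.not_isVertexCut (hC : IsCompOf G R C) (hRA : R ⊆ Aᶜ) (hx : x ∈ nbhd G C)
    (hy : y ∈ nbhd G C) : ¬ IsVertexCut G x y A := by
  obtain ⟨-, a, haC, hax⟩ := hx
  obtain ⟨-, b, hbC, hby⟩ := hy
  intro hcut
  obtain ⟨hxA, hyA, hxy⟩ := isVertexCut_iff.1 hcut
  have hCA : C ⊆ Aᶜ := hC.subset.trans hRA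
  have hxa : a ∈ compIn G Aᶜ x := mem_compIn_of_adj hxA (hCA haC) hax.symm
  have hab : b ∈ compIn G Aᶜ a := compIn_mono hRA (hC.eq_compIn haC ▸ hbC)
  have hby : y ∈ compIn G Aᶜ b := mem_compIn_of_adj (hCA hbC) hyA hby
  exact hxy (mem_compIn_trans (mem_compIn_trans hxa hab) hby)

theorem IsVertexCut.sdiff_pair_union (h : IsVertexCut G x y A) (hx : x ∈ X) (hy : y ∈ X) :
    IsVertexCut G x y (X \ {x, y} ∪ A \ X) := by
  obtain ⟨hxA, hyA, -⟩ := isVertexCut_iff.1 h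
  refine h.mono (fun z hz => ?_) (by simp [hx]) (by simp [hy])
  by_cases hzX : z ∈ X
  · refine Or.inl ⟨hzX, ?_⟩
    rintro (rfl | rfl) <;> contradiction
  · exact Or.inr ⟨hz, hzX⟩

theorem exists_uniform_separator (G : SimpleGraph V) (X : Set V) (m : ℕ∞) :
    ∃ W ⊆ Xᶜ, W.encard ≤ X.encard ^ 2 * m ∧
      ∀ x ∈ X, ∀ y ∈ X, ∀ A, A.encard ≤ m → IsVertexCut G x y A →
        IsVertexCut G x y (X \ {x, y} ∪ W) := by
  have separator_of_pair (p : V × V) : ∃ B ⊆ Xᶜ, B.encard ≤ m ∧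
      ∀ A, A.encard ≤ m → p ∈ X ×ˢ X → IsVertexCut G p.1 p.2 A →
        IsVertexCut G p.1 p.2 (X \ {p.1, p.2} ∪ B) := by
    by_cases h : ∃ A, A.encard ≤ m ∧ IsVertexCut G p.1 p.2 A
    · obtain ⟨A, hAm, hA⟩ := h
      exact ⟨A \ X, fun z hz => hz.2, (encard_le_encard sdiff_subset).trans hAm,
        fun _ _ hp _ => hA.sdiff_pair_union hp.1 hp.2⟩
    · exact ⟨∅, empty_subset _, by simp, fun A hAm _ hA => absurd ⟨A, hAm, hA⟩ h⟩
  choose B hBX hBm hB using separator_of_pair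
  have hWX : ⋃ p ∈ X ×ˢ X, B p ⊆ Xᶜ := iUnion₂_subset fun p _ => hBX p
  refine ⟨⋃ p ∈ X ×ˢ X, B p, hWX, ?_, fun x hx y hy A hAm hA => ?_⟩
  · rw [sq, ← encard_prod]
    exact encard_biUnion_le_mul fun p _ => hBm p
  · have hp : (x, y) ∈ X ×ˢ X := ⟨hx, hy⟩
    refine (hB (x, y) A hAm hp hA).mono
      (union_subset_union_right _ (subset_biUnion_of_mem hp)) ?_ ?_
    · rintro (h | h)
      exacts [h.2 (Or.inl rfl), hWX h hx]
    · rintro (h | h)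
      exacts [h.2 (Or.inr rfl), hWX h hy]

end VertexCuts

section Treedepth

variable {G : SimpleGraph V} {S : Set V} {m n : ℕ}

theorem tdLE_succ_iff :
    tdLE G (n + 1) S ↔ ∀ C, IsCompOf G S C → ∃ v ∈ C, tdLE G n (C \ {v}) :=
  ⟨fun h _ ⟨x, hx, hC⟩ => hC ▸ h x hx, fun h _ hx => h _ (isCompOf_compIn hx)⟩

theorem tdLE.succ (h : tdLE G n S) : tdLE G (n + 1) S := by
  induction n generalizing S with
  | zero => exact fun x hx => absurd (h ▸ hx) (notMem_empty x)
  | succ n ih =>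
    intro x hx
    obtain ⟨v, hv, hlt⟩ := h x hx
    exact ⟨v, hv, ih hlt⟩

theorem tdLE.mono (hmn : m ≤ n) (h : tdLE G m S) : tdLE G n S := by
  induction hmn with
  | refl => exact h
  | step _ ih => exact ih.succ

theorem tdLE_of_encard_le (h : S.encard ≤ n) : tdLE G n S := by
  induction n generalizing S with
  | zero => exact encard_eq_zero.1 (nonpos_iff_eq_zero.1 h)
  | succ n ih =>
    intro x hx
    refine ⟨x, self_mem_compIn hx, ih ?_⟩
    have hS : (S \ {x}).encard + 1 ≤ n + 1 := by
      rw [encard_sdiff_singleton_add_one hx]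
      exact_mod_cast h
    exact (encard_le_encard (sdiff_subset_sdiff_left compIn_subset)).trans
      ((ENat.add_le_add_iff_right ENat.one_ne_top).1 hS)

theorem tdLE_of_td_le (hS : S.Finite) (h : td G S ≤ n) : tdLE G n S := by
  have hne : {m | tdLE G m S}.Nonempty := ⟨S.ncard, tdLE_of_encard_le hS.cast_ncard_eq.ge⟩
  exact (show tdLE G (td G S) S from Nat.sInf_mem hne).mono h

end Treedepth

namespace RootedForest

variable {A : Set V} {n : ℕ}

/-- The ancestors of `v` in a rooted forest, including `v` itself when `v` is in the forest. -/
def ancestors (F : RootedForest V A) (v : V) : Set V :=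
  {u | F.anc u v}

/-- Every vertex has at most `n` ancestors. This is `F.depth ≤ n`, but without assuming that the
vertex type is finite. -/
def DepthLE (F : RootedForest V A) (n : ℕ) : Prop :=
  ∀ v, (F.ancestors v).encard ≤ n

/-- The smallest set that contains the vertices of `W` lying in the forest and is closed under
taking ancestors. -/
def ancestorClosure (F : RootedForest V A) (W : Set V) : Set V :=
  ⋃ w ∈ W, F.ancestors w

section Ancestors

variable {F : RootedForest V A} {Q W : Set V} {u v z : V}

theorem ancestors_subset_ancestors (h : F.anc u v) : F.ancestors u ⊆ F.ancestors v :=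
  fun _ hw => F.trans hw h

theorem DepthLE.finite_ancestors (hF : F.DepthLE n) (v : V) : (F.ancestors v).Finite :=
  finite_of_encard_le_coe (hF v)

theorem ancestorClosure_subset : F.ancestorClosure W ⊆ A :=
  iUnion₂_subset fun _ _ _ h => F.mem_left h

theorem subset_ancestorClosure (hW : W ⊆ A) : W ⊆ F.ancestorClosure W :=
  fun w hw => mem_biUnion hw (F.refl w (hW hw))

theorem ancestors_subset_ancestorClosure (hz : z ∈ F.ancestorClosure W) :
    F.ancestors z ⊆ F.ancestorClosure W := by
  obtain ⟨w, hw, hzw⟩ := mem_iUnion₂.1 hz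
  exact (ancestors_subset_ancestors hzw).trans (subset_biUnion_of_mem hw)

theorem DepthLE.encard_ancestorClosure_le (hF : F.DepthLE n) :
    (F.ancestorClosure W).encard ≤ W.encard * n :=
  encard_biUnion_le_mul fun w _ => hF w

theorem DepthLE.encard_le_of_isChain (hF : F.DepthLE n) (hQA : Q ⊆ A) (hQ : IsChain F.anc Q) :
    Q.encard ≤ n := by
  by_contra! hlt
  obtain ⟨T, hTQ, hT⟩ := exists_subset_encard_eq (Order.add_one_le_of_lt hlt)
  have hTfin : T.Finite := finite_of_encard_le_coe (k := n + 1) (by simp [hT])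
  have hTne : T.Nonempty := by simp [← encard_ne_zero, hT]
  obtain ⟨b, hbT, hbmax⟩ := hTfin.exists_maximalFor F.ancestors T hTne
  have hTb : T ⊆ F.ancestors b := by
    intro u hu
    have hself : u ∈ F.ancestors u := F.refl u (hQA (hTQ hu))
    rcases eq_or_ne u b with rfl | hub
    · exact hself
    · rcases hQ (hTQ hu) (hTQ hbT) hub with h | h
      · exact h
      · exact hbmax hu (ancestors_subset_ancestors h) hself
  exact absurd (hT ▸ (encard_le_encard hTb).trans (hF b)) (by simp [ENat.add_one_le_iff])

end Ancestors

section Constructions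

/-- The rooted tree obtained from a forest by joining all its roots to a new root `r`. -/
def addRoot {r : V} (F : RootedForest V A) (hr : r ∉ A) : RootedForest V (insert r A) where
  anc u v := u = r ∧ v ∈ insert r A ∨ F.anc u v
  mem_left := by
    rintro u v (⟨rfl, -⟩ | h)
    exacts [mem_insert _ _, mem_insert_of_mem _ (F.mem_left h)]
  mem_right := by
    rintro u v (⟨-, h⟩ | h)
    exacts [h, mem_insert_of_mem _ (F.mem_right h)]
  refl := by
    rintro v (rfl | hv)
    exacts [Or.inl ⟨rfl, mem_insert _ _⟩, Or.inr (F.refl v hv)]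
  trans := by
    rintro u v w (⟨rfl, -⟩ | huv) (⟨rfl, hw⟩ | hvw)
    · exact Or.inl ⟨rfl, hw⟩
    · exact Or.inl ⟨rfl, mem_insert_of_mem _ (F.mem_right hvw)⟩
    · exact absurd (F.mem_right huv) hr
    · exact Or.inr (F.trans huv hvw)
  antisymm := by
    rintro u v (⟨rfl, -⟩ | huv) (⟨rfl, -⟩ | hvu)
    · rfl
    · exact absurd (F.mem_right hvu) hr
    · exact absurd (F.mem_right huv) hr
    · exact F.antisymm huv hvu
  chain := by
    rintro u w v (⟨rfl, -⟩ | huv) (⟨rfl, -⟩ | hwv)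
    · exact Or.inl (Or.inl ⟨rfl, mem_insert _ _⟩)
    · exact Or.inl (Or.inl ⟨rfl, mem_insert_of_mem _ (F.mem_left hwv)⟩)
    · exact Or.inr (Or.inl ⟨rfl, mem_insert_of_mem _ (F.mem_left huv)⟩)
    · exact (F.chain huv hwv).imp Or.inr Or.inr

theorem DepthLE.addRoot {r : V} {F : RootedForest V A} (hF : F.DepthLE n) (hr : r ∉ A) :
    (F.addRoot hr).DepthLE (n + 1) := by
  intro v
  have hsub : (F.addRoot hr).ancestors v ⊆ insert r (F.ancestors v) :=
    fun u hu => hu.imp And.left id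
  calc ((F.addRoot hr).ancestors v).encard
      ≤ (F.ancestors v).encard + 1 := (encard_le_encard hsub).trans (encard_insert_le _ _)
    _ ≤ (n + 1 : ℕ) := by exact_mod_cast add_le_add_left (hF v) 1

variable {ι : Type*} {K : ι → Set V}

/-- The disjoint union of a family of rooted forests. -/
def iUnion (hK : Pairwise (Function.onFun Disjoint K)) (F : ∀ i, RootedForest V (K i)) :
    RootedForest V (⋃ i, K i) where
  anc u v := ∃ i, (F i).anc u v
  mem_left := fun ⟨i, h⟩ => mem_iUnion.2 ⟨i, (F i).mem_left h⟩
  mem_right := fun ⟨i, h⟩ => mem_iUnion.2 ⟨i, (F i).mem_right h⟩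
  refl := fun v hv => (mem_iUnion.1 hv).imp fun i hi => (F i).refl v hi
  trans := by
    rintro u v w ⟨i, huv⟩ ⟨j, hvw⟩
    obtain rfl := hK.eq (not_disjoint_iff.2 ⟨v, (F i).mem_right huv, (F j).mem_left hvw⟩)
    exact ⟨i, (F i).trans huv hvw⟩
  antisymm := by
    rintro u v ⟨i, huv⟩ ⟨j, hvu⟩
    obtain rfl := hK.eq (not_disjoint_iff.2 ⟨v, (F i).mem_right huv, (F j).mem_left hvu⟩)
    exact (F i).antisymm huv hvu
  chain := by
    rintro u w v ⟨i, huv⟩ ⟨j, hwv⟩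
    obtain rfl := hK.eq (not_disjoint_iff.2 ⟨v, (F i).mem_right huv, (F j).mem_right hwv⟩)
    exact ((F i).chain huv hwv).imp (⟨i, ·⟩) (⟨i, ·⟩)

theorem DepthLE.iUnion {hK : Pairwise (Function.onFun Disjoint K)}
    {F : ∀ i, RootedForest V (K i)} (hF : ∀ i, (F i).DepthLE n) :
    (RootedForest.iUnion hK F).DepthLE n := by
  intro v
  rcases eq_empty_or_nonempty ((RootedForest.iUnion hK F).ancestors v) with h | ⟨w, i, hwv⟩
  · simp [h]
  · refine (encard_le_encard ?_).trans (hF i v)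
    rintro u ⟨j, huv⟩
    obtain rfl := hK.eq (not_disjoint_iff.2 ⟨v, (F i).mem_right hwv, (F j).mem_right huv⟩)
    exact huv

end Constructions

end RootedForest

section TreedepthDecompositions

variable {G : SimpleGraph V} {A C Q R S Z : Set V} {n : ℕ} {x y : V}

theorem exists_isTDDecompOn_of_sdiff_singleton {r : V} (hr : r ∈ A)
    (h : ∃ F : RootedForest V (A \ {r}), IsTDDecompOn G (A \ {r}) F ∧ F.DepthLE n) :
    ∃ F : RootedForest V A, IsTDDecompOn G A F ∧ F.DepthLE (n + 1) := by
  obtain ⟨F, hF, hdepth⟩ := h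
  have hrA : r ∉ A \ {r} := fun h => h.2 rfl
  rw [← insert_sdiff_self_of_mem hr]
  refine ⟨F.addRoot hrA, ?_, hdepth.addRoot hrA⟩
  intro u v hu hv huv
  rcases hu with rfl | hu
  · exact Or.inl (Or.inl ⟨rfl, hv⟩)
  rcases hv with rfl | hv
  · exact Or.inr (Or.inl ⟨rfl, mem_insert_of_mem _ hu⟩)
  · exact (hF u v hu hv huv).imp Or.inr Or.inr

theorem exists_isTDDecompOn_of_isCompOf
    (h : ∀ C, IsCompOf G A C → ∃ F : RootedForest V C, IsTDDecompOn G C F ∧ F.DepthLE n) :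
    ∃ F : RootedForest V A, IsTDDecompOn G A F ∧ F.DepthLE n := by
  choose F hF hdepth using fun C : {C // IsCompOf G A C} => h C.1 C.2
  have on_iUnion : ∃ F : RootedForest V (⋃ C : {C // IsCompOf G A C}, C.1),
      IsTDDecompOn G (⋃ C : {C // IsCompOf G A C}, C.1) F ∧ F.DepthLE n := by
    refine ⟨.iUnion pairwise_disjoint_isCompOf F, fun u v hu hv huv => ?_, .iUnion hdepth⟩
    obtain ⟨C, huC⟩ := mem_iUnion.1 hu
    have hvC : v ∈ C.1 := C.2.mem_of_adj huC (iUnion_isCompOf G A ▸ hv) huv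
    exact (hF C u v huC hvC huv).imp (⟨C, ·⟩) (⟨C, ·⟩)
  rwa [iUnion_isCompOf] at on_iUnion

theorem exists_isTDDecompOn_of_tdLE (h : tdLE G n A) :
    ∃ F : RootedForest V A, IsTDDecompOn G A F ∧ F.DepthLE n := by
  induction n generalizing A with
  | zero =>
    obtain rfl : A = ∅ := h
    exact exists_isTDDecompOn_of_isCompOf fun _ ⟨x, hx, _⟩ => absurd hx (notMem_empty x)
  | succ n ih =>
    refine exists_isTDDecompOn_of_isCompOf fun C hC => ?_
    obtain ⟨r, hrC, hr⟩ := tdLE_succ_iff.1 h C hC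
    exact exists_isTDDecompOn_of_sdiff_singleton hrC (ih hr)

variable {F : RootedForest V A}

theorem IsTDDecompOn.exists_forall_anc (hF : IsTDDecompOn G A F)
    (hfin : ∀ v, (F.ancestors v).Finite) (hRA : R ⊆ A) (hC : IsCompOf G R C) :
    ∃ r ∈ C, ∀ v ∈ C, F.anc r v := by
  obtain ⟨x, hx, rfl⟩ := hC
  obtain ⟨r, ⟨hrC, hrx⟩, hrmin⟩ :=
    ((hfin x).inter_of_right (compIn G R x)).exists_minimalFor F.ancestors _
      ⟨x, self_mem_compIn hx, F.refl x (hRA hx)⟩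
  have hCr : compIn G R x = compIn G R r := (isCompOf_compIn hx).eq_compIn hrC
  refine ⟨r, hrC, fun v hv => ?_⟩
  rw [hCr] at hv
  -- Moving along an edge from a descendant of `r` leads to another one, or to an ancestor of `r`
  -- inside the component, and by minimality `r` is the only such ancestor.
  refine compIn_induction (F.refl r (hRA (compIn_subset hrC))) (fun u hu v hv huv hru => ?_) hv
  rcases hF u v (hRA (compIn_subset hu)) (hRA hv) huv with h | hvu
  · exact F.trans hru h
  rcases F.chain hru hvu with h | hvr
  · exact h
  have hvC : v ∈ compIn G R x :=
    hCr ▸ mem_compIn_trans hu (mem_compIn_of_adj (compIn_subset hu) hv huv)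
  exact hrmin ⟨hvC, F.trans hvr hrx⟩ (RootedForest.ancestors_subset_ancestors hvr)
    (F.refl r (hRA (compIn_subset hrC)))

theorem IsTDDecompOn.exists_nbhd_inter_subset_ancestors (hF : IsTDDecompOn G A F)
    (hfin : ∀ v, (F.ancestors v).Finite) (hRA : R ⊆ A) (hZA : Z ⊆ A) (hRZ : Disjoint R Z)
    (hZ : ∀ z ∈ Z, F.ancestors z ⊆ Z) (hC : IsCompOf G R C) :
    ∃ r, nbhd G C ∩ Z ⊆ F.ancestors r := by
  obtain ⟨r, hrC, hr⟩ := hF.exists_forall_anc hfin hRA hC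
  have not_anc {c z : V} (hc : c ∈ C) (hz : z ∈ Z) : ¬ F.anc c z :=
    fun h => Set.disjoint_left.1 hRZ (hC.subset hc) (hZ z hz h)
  refine ⟨r, ?_⟩
  rintro z ⟨⟨-, c, hcC, hcz⟩, hzZ⟩
  have hzc : F.anc z c :=
    (hF c z (hRA (hC.subset hcC)) (hZA hzZ) hcz).resolve_left (not_anc hcC hzZ)
  exact (F.chain hzc (hr c hcC)).resolve_right (not_anc hrC hzZ)

theorem IsTDDecompOn.notMem_compIn_sdiff_common_ancestors (hF : IsTDDecompOn G A F)
    (hfin : ∀ v, (F.ancestors v).Finite) :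
    y ∉ compIn G (A \ (F.ancestors x ∩ F.ancestors y)) x := by
  intro hy
  obtain ⟨r, hrC, hr⟩ := hF.exists_forall_anc hfin sdiff_subset (isCompOf_compIn hy.1)
  exact (compIn_subset hrC).2 ⟨hr x (self_mem_compIn hy.1), hr y hy⟩

theorem exists_isVertexCut_of_lt_encard (hS : tdLE G n Sᶜ) (hQS : Q ⊆ Sᶜ) (hQ : n < Q.encard) :
    ∃ x ∈ Q, ∃ y ∈ Q, ∃ B : Set V, B.encard ≤ n ∧ IsVertexCut G x y (S ∪ B) := by
  obtain ⟨F, hF, hdepth⟩ := exists_isTDDecompOn_of_tdLE hS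
  have hchain : ¬ IsChain F.anc Q := fun h => hQ.not_ge (hdepth.encard_le_of_isChain hQS h)
  obtain ⟨x, hx, y, hy, -, hxy⟩ :
      ∃ x ∈ Q, ∃ y ∈ Q, x ≠ y ∧ ¬ (F.anc x y ∨ F.anc y x) := by
    simpa [IsChain, Set.Pairwise] using hchain
  refine ⟨x, hx, y, hy, F.ancestors x ∩ F.ancestors y,
    (encard_le_encard inter_subset_left).trans (hdepth x), isVertexCut_iff.2 ⟨?_, ?_, ?_⟩⟩
  · rintro (h | h)
    exacts [hQS hx h, hxy (Or.inl h.2)]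
  · rintro (h | h)
    exacts [hQS hy h, hxy (Or.inr h.1)]
  · rw [compl_union, ← sdiff_eq]
    exact hF.notMem_compIn_sdiff_common_ancestors hdepth.finite_ancestors

end TreedepthDecompositions

-- Treedepth bounds are expressed by `tdLE`, since `td` is `0` by convention where no bound exists.
theorem stmt1_general (η k : ℕ) (G : SimpleGraph V) (X : Set V) (hX : tdLE G η Xᶜ) :
    ∃ Z : Set V, Z ⊆ Xᶜ ∧ Z.encard ≤ η * (k + η) * X.encard ^ 2 ∧
      (∀ C, IsCompOf G (X ∪ Z)ᶜ C → (nbhd G C ∩ Z).encard ≤ η) ∧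
      (∀ S, tdLE G η Sᶜ → S.encard ≤ k →
        ∀ C, IsCompOf G (X ∪ Z)ᶜ C → ((nbhd G C ∩ X) \ S).encard ≤ η) := by
  obtain ⟨F, hF, hdepth⟩ := exists_isTDDecompOn_of_tdLE hX
  obtain ⟨W, hWX, hWcard, hW⟩ := exists_uniform_separator G X (k + η)
  have hRX : (X ∪ F.ancestorClosure W)ᶜ ⊆ Xᶜ := compl_subset_compl.2 subset_union_left
  refine ⟨F.ancestorClosure W, RootedForest.ancestorClosure_subset, ?_, fun C hC => ?_,
    fun S hS hSk C hC => ?_⟩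
  · calc (F.ancestorClosure W).encard ≤ W.encard * η := hdepth.encard_ancestorClosure_le
      _ ≤ X.encard ^ 2 * (k + η) * η := by gcongr
      _ = η * (k + η) * X.encard ^ 2 := by ring
  · obtain ⟨r, hr⟩ := hF.exists_nbhd_inter_subset_ancestors hdepth.finite_ancestors hRX
      RootedForest.ancestorClosure_subset
      (disjoint_compl_left.mono_right subset_union_right)
      (fun _ => RootedForest.ancestors_subset_ancestorClosure) hC
    exact (encard_le_encard hr).trans (hdepth r)
  · by_contra! hlt
    obtain ⟨x, hx, y, hy, B, hB, hcut⟩ := exists_isVertexCut_of_lt_encard hS (fun z hz => hz.2) hlt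
    have hSB : (S ∪ B).encard ≤ k + η := (encard_union_le S B).trans (add_le_add hSk hB)
    refine hC.not_isVertexCut (compl_subset_compl.2 ?_) hx.1.1 hy.1.1
      (hW x hx.1.2 y hy.1.2 (S ∪ B) hSB hcut)
    exact union_subset_union sdiff_subset (RootedForest.subset_ancestorClosure hWX)

/-- given an `η`-treedepth deletion set `X`, there is a set
`Z ⊆ V(G) ∖ X` of size at most `η·(k+η)·|X|²` such that, with `R = V(G) ∖ (X ∪ Z)`,
every connected component `C` of `G[R]` has at most `η` neighbors in `Z`, and every
`η`-treedepth deletion set `S` of size at most `k` misses at most `η` vertices of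
`N_G(C) ∩ X`. -/
theorem stmt1 {V : Type*} [Fintype V] (η k : ℕ) (hη : 1 ≤ η) (hk : 1 ≤ k)
    (G : SimpleGraph V) (X : Set V) (hX : IsTDS G η X) :
    ∃ Z : Set V, Z ⊆ Xᶜ ∧ Z.ncard ≤ η * (k + η) * X.ncard ^ 2 ∧
      (∀ C, IsCompOf G (X ∪ Z)ᶜ C → (nbhd G C ∩ Z).ncard ≤ η) ∧
      (∀ S, IsTDS G η S → S.ncard ≤ k →
        ∀ C, IsCompOf G (X ∪ Z)ᶜ C → ((nbhd G C ∩ X) \ S).ncard ≤ η) := by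
  have h := stmt1_general η k G X (tdLE_of_td_le (toFinite _) hX)
  simp only [← coe_ncard_eq_encard] at h
  obtain ⟨Z, hZX, hZ, hNZ, hNX⟩ := h
  exact ⟨Z, hZX, mod_cast hZ, mod_cast hNZ,
    fun S hS hSk => mod_cast hNX S (tdLE_of_td_le (toFinite _) hS) (mod_cast hSk)⟩
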